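/- Let X be a connected topological manifold (finite-dimensional, second countable, Hausdorff) and let V→X be a topological real vector bundle of finite rank equipped with a metric, i.e. a continuous choice of inner product on each fiber. Then there exist N∈ℕ, a topological real vector bundle W→X equipped with a metric, and an isomorphism of vector bundles V⊕W ≅ X×ℝ^N over X which is a fiberwise isometry, where the trivial bundle X×ℝ^N carries the standard Euclidean metric on each fiber. -/

import Mathlib

open Bundle

/-- A topological real vector bundle of rank `r` over `X`, equipped with a metric:
a continuous choice of inner product on each fiber (continuity expressed through
the trivializations of the bundle). -/
structure MetricVectorBundle (X : Type) [TopologicalSpace X] (r : ℕ) where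
  fiber : X → Type
  [topFiber : ∀ x, TopologicalSpace (fiber x)]
  [addFiber : ∀ x, AddCommGroup (fiber x)]
  [modFiber : ∀ x, Module ℝ (fiber x)]
  [topTotal : TopologicalSpace (Bundle.TotalSpace (Fin r → ℝ) fiber)]
  [isFiberBundle : FiberBundle (Fin r → ℝ) fiber]
  [isVectorBundle : VectorBundle ℝ (Fin r → ℝ) fiber]
  metric : ∀ x, fiber x →ₗ[ℝ] fiber x →ₗ[ℝ] ℝ
  metric_symm : ∀ x v w, metric x v w = metric x w v
  metric_posdef : ∀ x v, v ≠ 0 → 0 < metric x v v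
  metric_continuous : ∀ (e : Trivialization (Fin r → ℝ) (π (Fin r → ℝ) fiber)),
    MemTrivializationAtlas e →
    ContinuousOn (fun p : X × (Fin r → ℝ) × (Fin r → ℝ) =>
      metric p.1 (e.symm p.1 p.2.1) (e.symm p.1 p.2.2))
      {p : X × (Fin r → ℝ) × (Fin r → ℝ) | p.1 ∈ e.baseSet}

attribute [instance] MetricVectorBundle.topFiber MetricVectorBundle.addFiber
  MetricVectorBundle.modFiber MetricVectorBundle.topTotal
  MetricVectorBundle.isFiberBundle MetricVectorBundle.isVectorBundle


section PartOne

/-- A tuple of `M` vectors of `ℝ^r` containing `r` linearly independent ones. -/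
def GoodTuple {M r : ℕ} (A : Fin M → Fin r → ℝ) : Prop :=
  ∃ I : Fin r → Fin M, LinearIndependent ℝ (fun j => A (I j))

lemma isOpen_goodTuple (M r : ℕ) : IsOpen {A : Fin M → Fin r → ℝ | GoodTuple A} := by
  have : {A : Fin M → Fin r → ℝ | GoodTuple A} = ⋃ I : Fin r → Fin M,
      (fun (A : Fin M → Fin r → ℝ) (j : Fin r) => A (I j)) ⁻¹'
        {f : Fin r → Fin r → ℝ | LinearIndependent ℝ f} := by
    ext A; simp [GoodTuple]
  rw [this]
  refine isOpen_iUnion fun I => ?_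
  refine (isOpen_setOfPred_linearIndependent (𝕜 := ℝ)).preimage ?_
  fun_prop

lemma factor_of_not_good {M r : ℕ} {A : Fin M → Fin r → ℝ} (hA : ¬ GoodTuple A) :
    ∃ (P : Fin (r - 1) → Fin r → ℝ) (B : Fin M → Fin (r - 1) → ℝ),
      A = fun a => ∑ l, B a l • P l := by
  obtain ⟨f, hf, hspan, hli⟩ := Submodule.exists_fun_fin_finrank_span_eq ℝ (Set.range A)
  generalize Module.finrank ℝ (Submodule.span ℝ (Set.range A)) = d at f hf hspan hli
  have hdr : d < r := by
    by_contra hcon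
    push Not at hcon
    choose g hg using hf
    refine hA ⟨fun j => g (Fin.castLE hcon j), ?_⟩
    have := hli.comp (Fin.castLE hcon) (Fin.castLE_injective hcon)
    have h2 : (fun j => A (g (Fin.castLE hcon j))) = f ∘ Fin.castLE hcon := by
      ext j : 1
      simp [hg]
    rw [h2]
    exact this
  let P : Fin (r - 1) → Fin r → ℝ := fun l => if h : (l : ℕ) < d then f ⟨l, h⟩ else 0
  have hmem : ∀ a, A a ∈ Submodule.span ℝ (Set.range P) := by
    intro a
    have h1 : A a ∈ Submodule.span ℝ (Set.range f) := by
      rw [hspan]; exact Submodule.subset_span ⟨a, rfl⟩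
    refine Submodule.span_mono ?_ h1
    rintro _ ⟨i, rfl⟩
    refine ⟨⟨i, by have := i.2; omega⟩, ?_⟩
    simp [P]
  have : ∀ a, ∃ c : Fin (r - 1) → ℝ, ∑ l, c l • P l = A a := fun a =>
    (Submodule.mem_span_range_iff_exists_fun ℝ).1 (hmem a)
  choose B hB using this
  exact ⟨P, B, by ext a : 1; exact (hB a).symm⟩

lemma exists_small_shift {n M r : ℕ} (hM : n + r * r < M)
    (g : EuclideanSpace ℝ (Fin n) → Fin M → Fin r → ℝ) (hg : ContDiff ℝ 1 g)
    {ε : ℝ} (hε : 0 < ε) :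
    ∃ c : Fin M → Fin r → ℝ, ‖c‖ < ε ∧ ∀ y, GoodTuple (g y + c) := by
  rcases Nat.eq_zero_or_pos r with rfl | hr
  · refine ⟨0, by simpa using hε, fun y => ⟨Fin.elim0, linearIndependent_empty_type⟩⟩
  let Φ : EuclideanSpace ℝ (Fin n) × (Fin (r - 1) → Fin r → ℝ) × (Fin M → Fin (r - 1) → ℝ) →
      (Fin M → Fin r → ℝ) := fun z => (fun a => ∑ l, z.2.2 a l • z.2.1 l) - g z.1
  have hΦ : ContDiff ℝ 1 Φ := by
    refine ContDiff.sub ?_ (hg.comp contDiff_fst)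
    refine contDiff_pi.2 fun a => ?_
    refine ContDiff.sum fun l _ => ?_
    have h1 : ContDiff ℝ 1 (fun z : EuclideanSpace ℝ (Fin n) × (Fin (r - 1) → Fin r → ℝ) ×
        (Fin M → Fin (r - 1) → ℝ) => z.2.2 a l) := by fun_prop
    have h2 : ContDiff ℝ 1 (fun z : EuclideanSpace ℝ (Fin n) × (Fin (r - 1) → Fin r → ℝ) ×
        (Fin M → Fin (r - 1) → ℝ) => z.2.1 l) := by fun_prop
    exact h1.smul h2
  have hdim : Module.finrank ℝ (EuclideanSpace ℝ (Fin n) × (Fin (r - 1) → Fin r → ℝ) ×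
      (Fin M → Fin (r - 1) → ℝ)) < Module.finrank ℝ (Fin M → Fin r → ℝ) := by
    have e1 : ∀ a b : ℕ, Module.finrank ℝ (Fin a → Fin b → ℝ) = a * b := by
      intro a b
      rw [Module.finrank_pi_fintype]; simp
    rw [Module.finrank_prod, Module.finrank_prod, e1, e1, e1]
    simp only [finrank_euclideanSpace, Fintype.card_fin]
    obtain ⟨q, rfl⟩ : ∃ q, r = q + 1 := ⟨r - 1, by omega⟩
    simp only [Nat.add_sub_cancel]
    nlinarith
  have hd := hΦ.dense_compl_range_of_finrank_lt_finrank hdim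
  obtain ⟨c, hc, hcε⟩ := hd.exists_dist_lt 0 hε
  refine ⟨c, by simpa [dist_comm] using hcε, fun y => ?_⟩
  by_contra hcon
  obtain ⟨P, B, hPB⟩ := factor_of_not_good hcon
  refine hc ⟨(y, P, B), ?_⟩
  simp only [Φ]
  rw [← hPB]
  simp

lemma exists_perturbation {n M r : ℕ} (hM : n + r * r < M) {X : Type} [TopologicalSpace X]
    [T2Space X] [NormalSpace X]
    (ψ : OpenPartialHomeomorph X (EuclideanSpace ℝ (Fin n))) {K : Set X} (hK : IsCompact K)
    (hKψ : K ⊆ ψ.source) (h : X → Fin M → Fin r → ℝ) (hh : ContinuousOn h K)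
    {ε : ℝ} (hε : 0 < ε) :
    ∃ δ : C(X, Fin M → Fin r → ℝ), (∀ x, ‖δ x‖ ≤ ε) ∧ ∀ x ∈ K, GoodTuple (h x + δ x) := by
  have hL : IsCompact (ψ '' K) := hK.image_of_continuousOn (ψ.continuousOn.mono hKψ)
  have hcomp : ContinuousOn (h ∘ ψ.symm) (ψ '' K) := by
    refine hh.comp (ψ.continuousOn_symm.mono ?_) ?_
    · rintro _ ⟨x, hx, rfl⟩; exact ψ.map_source (hKψ hx)
    · rintro _ ⟨x, hx, rfl⟩; rw [ψ.left_inv (hKψ hx)]; exact hx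
  obtain ⟨G, hG⟩ := ContinuousMap.exists_restrict_eq (Y := Fin M → Fin r → ℝ) hL.isClosed
    ⟨_, continuousOn_iff_continuous_domRestrict.1 hcomp⟩
  have hGx : ∀ x ∈ K, G (ψ x) = h x := by
    intro x hx
    have := congrArg (fun F => F ⟨ψ x, ⟨x, hx, rfl⟩⟩) hG
    simpa [ψ.left_inv (hKψ hx)] using this
  obtain ⟨g, hg, hgG, -⟩ := G.continuous.exists_contDiff_approx 1 (ε := fun _ => ε / 2)
    continuous_const (fun _ => half_pos hε)
  obtain ⟨c, hc, hgood⟩ := exists_small_shift hM g hg (half_pos hε)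
  have hδc : ContinuousOn (fun x => g (ψ x) + c - h x) K :=
    (((hg.continuous.comp_continuousOn (ψ.continuousOn.mono hKψ)).add continuousOn_const).sub hh)
  have hδn : ∀ x ∈ K, ‖g (ψ x) + c - h x‖ ≤ ε := by
    intro x hx
    have h1 := hgG (ψ x)
    rw [hGx x hx, dist_eq_norm] at h1
    have : g (ψ x) + c - h x = (g (ψ x) - h x) + c := by abel
    rw [this]
    refine (norm_add_le _ _).trans ?_
    linarith
  have := Metric.instTietzeExtensionClosedBall.{0, 0} ℝ (0 : Fin M → Fin r → ℝ) hε
  obtain ⟨δ, hδm, hδ⟩ := ContinuousMap.exists_forall_mem_restrict_eq (X := X) (s := K)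
    (t := Metric.closedBall (0 : Fin M → Fin r → ℝ) ε) hK.isClosed
    (f := ⟨_, continuousOn_iff_continuous_domRestrict.1 hδc⟩)
    (by rintro ⟨x, hx⟩; simpa using hδn x hx)
  refine ⟨δ, fun x => by simpa using hδm x, fun x hx => ?_⟩
  have h2 : δ x = g (ψ x) + c - h x := by
    have := congrArg (fun F => F ⟨x, hx⟩) hδ
    simpa using this
  rw [h2]
  have : h x + (g (ψ x) + c - h x) = g (ψ x) + c := by abel
  rw [this]
  exact hgood _

end PartOne

section PartTwo

open Topology Filter

variable {X : Type} [TopologicalSpace X] {r : ℕ} (V : MetricVectorBundle X r)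

/-- the map to the total space given by a base map and a choice of fiber elements -/
abbrev MetricVectorBundle.mk' {Y : Type} (p : Y → X) (σ : ∀ y, V.fiber (p y)) (y : Y) :
    TotalSpace (Fin r → ℝ) V.fiber := ⟨p y, σ y⟩

variable {Y : Type} [TopologicalSpace Y] {p : Y → X} {σ τ : ∀ y, V.fiber (p y)}
  {S : Set Y} {y₀ : Y}

lemma triv_add (e : Trivialization (Fin r → ℝ) (π (Fin r → ℝ) V.fiber))
    [MemTrivializationAtlas e] {x : X} (hx : x ∈ e.baseSet) (v w : V.fiber x) :
    (e ⟨x, v + w⟩).2 = (e ⟨x, v⟩).2 + (e ⟨x, w⟩).2 :=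
  (e.linear ℝ hx).map_add v w

lemma triv_smul (e : Trivialization (Fin r → ℝ) (π (Fin r → ℝ) V.fiber))
    [MemTrivializationAtlas e] {x : X} (hx : x ∈ e.baseSet) (c : ℝ) (v : V.fiber x) :
    (e ⟨x, c • v⟩).2 = c • (e ⟨x, v⟩).2 :=
  (e.linear ℝ hx).map_smul c v

lemma triv_zero (e : Trivialization (Fin r → ℝ) (π (Fin r → ℝ) V.fiber))
    [MemTrivializationAtlas e] {x : X} (hx : x ∈ e.baseSet) :
    (e ⟨x, (0 : V.fiber x)⟩).2 = 0 := by
  have := triv_smul V e hx 0 0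
  simpa using this

lemma ts_base (hσ : ContinuousWithinAt (V.mk' p σ) S y₀) : ContinuousWithinAt p S y₀ :=
  ((FiberBundle.continuousWithinAt_totalSpace (Fin r → ℝ) _).1 hσ).1

lemma ts_near (hp : ContinuousWithinAt p S y₀) :
    ∀ᶠ y in 𝓝[S] y₀, p y ∈ (trivializationAt (Fin r → ℝ) V.fiber (p y₀)).baseSet :=
  hp ((trivializationAt (Fin r → ℝ) V.fiber (p y₀)).open_baseSet.mem_nhds
    (FiberBundle.mem_baseSet_trivializationAt' _))

lemma ts_add (hσ : ContinuousWithinAt (V.mk' p σ) S y₀)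
    (hτ : ContinuousWithinAt (V.mk' p τ) S y₀) :
    ContinuousWithinAt (V.mk' p (fun y => σ y + τ y)) S y₀ := by
  have hp := ts_base V hσ
  refine (FiberBundle.continuousWithinAt_totalSpace (Fin r → ℝ) _).2 ⟨hp, ?_⟩
  have h1 := ((FiberBundle.continuousWithinAt_totalSpace (Fin r → ℝ) _).1 hσ).2
  have h2 := ((FiberBundle.continuousWithinAt_totalSpace (Fin r → ℝ) _).1 hτ).2
  refine (h1.add h2).congr_of_eventuallyEq ?_ ?_
  · filter_upwards [ts_near V hp] with y hy
    exact triv_add V _ hy _ _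
  · exact triv_add V _ (FiberBundle.mem_baseSet_trivializationAt' _) _ _

lemma ts_smul {c : Y → ℝ} (hc : ContinuousWithinAt c S y₀)
    (hσ : ContinuousWithinAt (V.mk' p σ) S y₀) :
    ContinuousWithinAt (V.mk' p (fun y => c y • σ y)) S y₀ := by
  have hp := ts_base V hσ
  refine (FiberBundle.continuousWithinAt_totalSpace (Fin r → ℝ) _).2 ⟨hp, ?_⟩
  have h1 := ((FiberBundle.continuousWithinAt_totalSpace (Fin r → ℝ) _).1 hσ).2
  refine (hc.smul h1).congr_of_eventuallyEq ?_ ?_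
  · filter_upwards [ts_near V hp] with y hy
    exact triv_smul V _ hy _ _
  · exact triv_smul V _ (FiberBundle.mem_baseSet_trivializationAt' _) _ _

lemma ts_zero (hp : ContinuousWithinAt p S y₀) :
    ContinuousWithinAt (V.mk' p (fun _ => 0)) S y₀ := by
  refine (FiberBundle.continuousWithinAt_totalSpace (Fin r → ℝ) _).2 ⟨hp, ?_⟩
  refine (continuousWithinAt_const (b := (0 : Fin r → ℝ))).congr_of_eventuallyEq ?_ ?_
  · filter_upwards [ts_near V hp] with y hy
    exact triv_zero V _ hy
  · exact triv_zero V _ (FiberBundle.mem_baseSet_trivializationAt' _)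

lemma ts_sum {κ : Type} (s : Finset κ) {σ : κ → ∀ y, V.fiber (p y)}
    (hp : ContinuousWithinAt p S y₀)
    (hσ : ∀ k ∈ s, ContinuousWithinAt (V.mk' p (σ k)) S y₀) :
    ContinuousWithinAt (V.mk' p (fun y => ∑ k ∈ s, σ k y)) S y₀ := by
  classical
  induction s using Finset.induction_on with
  | empty => simpa using ts_zero V hp
  | insert a s ha ih =>
    have := ts_add V (hσ a (by simp)) (ih fun k hk => hσ k (by simp [hk]))
    simpa [Finset.sum_insert ha] using this

lemma ts_metric (hσ : ContinuousWithinAt (V.mk' p σ) S y₀)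
    (hτ : ContinuousWithinAt (V.mk' p τ) S y₀) :
    ContinuousWithinAt (fun y => V.metric (p y) (σ y) (τ y)) S y₀ := by
  have hp := ts_base V hσ
  have h1 := ((FiberBundle.continuousWithinAt_totalSpace (Fin r → ℝ) _).1 hσ).2
  have h2 := ((FiberBundle.continuousWithinAt_totalSpace (Fin r → ℝ) _).1 hτ).2
  set e := trivializationAt (Fin r → ℝ) V.fiber (p y₀) with he
  have hb : p y₀ ∈ e.baseSet := FiberBundle.mem_baseSet_trivializationAt' _
  have hopen : IsOpen {p : X × (Fin r → ℝ) × (Fin r → ℝ) | p.1 ∈ e.baseSet} :=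
    e.open_baseSet.preimage continuous_fst
  have hm := (V.metric_continuous e inferInstance).continuousAt
    (x := (p y₀, (e ⟨p y₀, σ y₀⟩).2, (e ⟨p y₀, τ y₀⟩).2)) (hopen.mem_nhds hb)
  have := hm.comp_continuousWithinAt_of_eq (f := fun y => (p y, (e ⟨p y, σ y⟩).2, (e ⟨p y, τ y⟩).2))
    (hp.prodMk (h1.prodMk h2)) rfl
  refine this.congr_of_eventuallyEq ?_ ?_
  · filter_upwards [ts_near V hp] with y hy
    simp only [Function.comp]
    rw [e.symm_apply_apply_mk hy, e.symm_apply_apply_mk hy]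
  · simp only [Function.comp]
    rw [e.symm_apply_apply_mk hb, e.symm_apply_apply_mk hb]

/-- continuity of the symmetric of a trivialization -/
lemma ts_symm (e : Trivialization (Fin r → ℝ) (π (Fin r → ℝ) V.fiber))
    {w : Y → Fin r → ℝ} (hp : ContinuousWithinAt p S y₀) (hw : ContinuousWithinAt w S y₀)
    (hb : p y₀ ∈ e.baseSet) :
    ContinuousWithinAt (V.mk' p (fun y => e.symm (p y) (w y))) S y₀ := by
  have h1 : ContinuousAt e.toOpenPartialHomeomorph.symm (p y₀, w y₀) :=
    e.toOpenPartialHomeomorph.continuousAt_symm (e.mem_target.2 hb)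
  have h2 := h1.comp_continuousWithinAt_of_eq (hp.prodMk hw) rfl
  refine h2.congr_of_eventuallyEq ?_ ?_
  · filter_upwards [hp (e.open_baseSet.mem_nhds hb)] with y hy
    exact e.mk_symm hy _
  · exact e.mk_symm hb _

end PartTwo

section PartThree

open Topology Filter Uniformity

lemma exists_global_sections {n : ℕ} (X : Type) [TopologicalSpace X]
    [ChartedSpace (EuclideanSpace ℝ (Fin n)) X]
    [T2Space X] [SecondCountableTopology X] (r : ℕ) (V : MetricVectorBundle X r) :
    ∃ (M : ℕ) (s : Fin M → ∀ x, V.fiber x), (∀ a, Continuous (V.mk' id (s a))) ∧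
      ∀ x, ∃ I : Fin r → Fin M, LinearIndependent ℝ (fun j => s (I j) x) := by
  classical
  have : LocallyCompactSpace X := ChartedSpace.locallyCompactSpace (EuclideanSpace ℝ (Fin n)) X
  let M := n + r * r + 1
  have hM : n + r * r < M := by omega
  let T := fun x : X => trivializationAt (Fin r → ℝ) V.fiber x
  have hT : ∀ x, x ∈ (T x).baseSet := fun x => FiberBundle.mem_baseSet_trivializationAt' x
  have hKex : ∀ x : X, ∃ K : Set X, IsCompact K ∧ x ∈ interior K ∧
      K ⊆ (chartAt (EuclideanSpace ℝ (Fin n)) x).source ∩ (T x).baseSet := fun x =>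
    exists_compact_subset
      ((chartAt (EuclideanSpace ℝ (Fin n)) x).open_source.inter (T x).open_baseSet)
      ⟨mem_chart_source _ x, hT x⟩
  choose K hKc hKx hKsub using hKex
  obtain ⟨D, hD, hDcov⟩ := TopologicalSpace.countable_cover_nhds
    (f := fun x => interior (K x)) (fun x => isOpen_interior.mem_nhds (hKx x))
  have : Countable D := hD.to_subtype
  obtain ⟨ρ, hρ⟩ := BumpCovering.exists_isSubordinate (X := X) (s := Set.univ) isClosed_univ
    (fun i : D => interior (K i)) (fun i => isOpen_interior) (by
      rw [← hDcov]
      intro x hx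
      simpa using hx)
  have hρK : ∀ i : D, tsupport (ρ i) ⊆ K i := fun i => (hρ i).trans interior_subset
  have hρb : ∀ i : D, tsupport (ρ i) ⊆ (T i).baseSet := fun i x hx => (hKsub i (hρK i hx)).2
  let 𝒞 := C(X, D → Fin M → Fin r → ℝ)
  let σ : 𝒞 → Fin M → ∀ x, V.fiber x := fun f a x =>
    ∑ᶠ i : D, ρ i x • (T i).symm x (f x i a)
  -- joint continuity
  have hterm : ∀ (i : D) (a : Fin M) (y₀ : 𝒞 × X), ContinuousWithinAt
      (V.mk' (Prod.snd : 𝒞 × X → X) (fun y => ρ i y.2 • (T i).symm y.2 (y.1 y.2 i a)))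
        Set.univ y₀ := by
    intro i a y₀
    have hev : Continuous (fun y : 𝒞 × X => y.1 y.2) := ContinuousEval.continuous_eval
    by_cases hy : y₀.2 ∈ tsupport (ρ i)
    · refine ts_smul V ?_ (ts_symm V (T i) (w := fun y : 𝒞 × X => y.1 y.2 i a) ?_ ?_ (hρb i hy))
      · exact ((ρ i).continuous.comp continuous_snd).continuousWithinAt
      · exact continuous_snd.continuousWithinAt
      · refine Continuous.continuousWithinAt ?_
        exact (continuous_apply a).comp ((continuous_apply i).comp hev)
    · have hz : ∀ᶠ y : 𝒞 × X in 𝓝[Set.univ] y₀, ρ i y.2 = 0 := by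
        rw [nhdsWithin_univ]
        have := (isClosed_tsupport (ρ i)).isOpen_compl.mem_nhds hy
        filter_upwards [continuous_snd.continuousAt.preimage_mem_nhds this] with y hy
        exact image_eq_zero_of_notMem_tsupport hy
      refine (ts_zero V continuous_snd.continuousWithinAt).congr_of_eventuallyEq ?_ ?_
      · filter_upwards [hz] with y hy
        simp [MetricVectorBundle.mk', hy]
      · simp [MetricVectorBundle.mk', image_eq_zero_of_notMem_tsupport hy]
  have hjoint : ∀ a, Continuous (V.mk' (Prod.snd : 𝒞 × X → X) (fun y => σ y.1 a y.2)) := by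
    intro a
    rw [continuous_iff_continuousAt]
    intro y₀
    rw [← continuousWithinAt_univ]
    obtain ⟨U, hU, hfin⟩ := ρ.locallyFinite y₀.2
    have hUev : ∀ y : 𝒞 × X, y.2 ∈ U → σ y.1 a y.2 =
        ∑ i ∈ hfin.toFinset, ρ i y.2 • (T i).symm y.2 (y.1 y.2 i a) := by
      intro y hy
      refine finsum_eq_sum_of_support_subset _ ?_
      intro i hi
      simp only [Set.Finite.coe_toFinset, Set.mem_ofPred_eq]
      refine ⟨y.2, ?_, hy⟩
      intro h0
      apply hi
      simp [h0]
    refine (ts_sum V hfin.toFinset continuous_snd.continuousWithinAt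
      (fun i _ => hterm i a y₀)).congr_of_eventuallyEq ?_ ?_
    · rw [nhdsWithin_univ]
      filter_upwards [continuous_snd.continuousAt.preimage_mem_nhds hU] with y hy
      simp only [MetricVectorBundle.mk', hUev y hy]
    · simp only [MetricVectorBundle.mk', hUev y₀ (mem_of_mem_nhds hU)]
  -- coordinates
  let H : D → 𝒞 → X → Fin M → Fin r → ℝ := fun k f x a => (T k ⟨x, σ f a x⟩).2
  have hH : ∀ k : D, ContinuousOn (fun y : 𝒞 × X => H k y.1 y.2) {y | y.2 ∈ (T k).baseSet} := by
    intro k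
    refine continuousOn_pi.2 fun a => ?_
    refine continuous_snd.comp_continuousOn ((T k).continuousOn.comp (hjoint a).continuousOn ?_)
    intro y hy
    exact (T k).mem_source.2 hy
  let C : D → Set X := fun k => {x | ρ k x = 1}
  have hCt : ∀ k, C k ⊆ tsupport (ρ k) := by
    intro k x hx
    apply subset_tsupport
    simp only [C, Set.mem_ofPred_eq] at hx
    simp [hx]
  have hCc : ∀ k, IsCompact (C k) := fun k =>
    (hKc k).of_isClosed_subset (isClosed_eq (ρ k).continuous continuous_const)
      ((hCt k).trans (hρK k))
  have hCb : ∀ k, C k ⊆ (T k).baseSet := fun k => (hCt k).trans (hρb k)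
  let O : D → Set 𝒞 := fun k => {f | ∀ x ∈ C k, GoodTuple (H k f x)}
  have hO : ∀ k, IsOpen (O k) := by
    intro k
    rw [isOpen_iff_eventually]
    intro f hf
    refine (hCc k).eventually_forall_of_forall_eventually
      (P := fun f x => GoodTuple (H k f x)) fun x hx => ?_
    have hcont : ContinuousAt (fun y : 𝒞 × X => H k y.1 y.2) (f, x) :=
      (hH k).continuousAt (((T k).open_baseSet.preimage continuous_snd).mem_nhds (hCb k hx))
    exact hcont.preimage_mem_nhds ((isOpen_goodTuple M r).mem_nhds (hf x hx))
  have hOd : ∀ k, Dense (O k) := by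
    intro k f
    let j : C(Fin M → Fin r → ℝ, D → Fin M → Fin r → ℝ) :=
      ⟨fun A => Pi.single k A, (continuous_const (y := (0 : D → Fin M → Fin r → ℝ))).update k
        continuous_id⟩
    let Ψ : C(X, Fin M → Fin r → ℝ) → 𝒞 := fun δ => f + j.comp δ
    have hΨ : Continuous Ψ := continuous_const.add (ContinuousMap.continuous_postcomp j)
    have hΨ0 : Ψ 0 = f := by
      ext x i : 2
      change f x i + Pi.single (M := fun _ => Fin M → Fin r → ℝ) k (0 : Fin M → Fin r → ℝ) i = f x i
      simp
    have hHk : ∀ δ, ∀ x ∈ C k, H k (Ψ δ) x = H k f x + δ x := by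
      intro δ x hx
      have hxb := hCb k hx
      have hρ1 : ρ k x = 1 := hx
      have hσ : ∀ a, σ (Ψ δ) a x = σ f a x + (T k).symm x (δ x a) := by
        intro a
        have hlin : ∀ (i : D) (u w : Fin r → ℝ), ρ i x • (T i).symm x (u + w) =
            ρ i x • (T i).symm x u + ρ i x • (T i).symm x w := by
          intro i u w
          by_cases hi : x ∈ (T i).baseSet
          · rw [← smul_add]
            congr 1
            have := ((T i).symmₗ ℝ x).map_add u w
            simpa only [Trivialization.symmₗ_apply _ hi] using this
          · have : ρ i x = 0 := by
              by_contra h0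
              exact hi (hρb i (subset_tsupport _ h0))
            simp [this]
        have h1 : σ (Ψ δ) a x = ∑ᶠ i : D, (ρ i x • (T i).symm x (f x i a) +
            ρ i x • (T i).symm x (Pi.single (M := fun _ => Fin M → Fin r → ℝ) k (δ x) i a)) := by
          refine finsum_congr fun i => ?_
          rw [← hlin]
          rfl
        have hz : ∀ i : D, ∀ w, ρ i x = 0 → ρ i x • (T i).symm x w = 0 := by
          intro i w h0
          simp [h0]
        rw [h1, finsum_add_distrib]
        · congr 1
          rw [finsum_eq_single _ k]
          · simp [hρ1]
          · intro i hi
            rw [Pi.single_eq_of_ne hi]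
            have := hlin i 0 0
            simpa using this
        · refine (ρ.point_finite x).subset fun i hi h0 => hi (hz i _ h0)
        · refine (ρ.point_finite x).subset fun i hi h0 => hi (hz i _ h0)
      ext1 a
      change (T k ⟨x, σ (Ψ δ) a x⟩).2 = (T k ⟨x, σ f a x⟩).2 + δ x a
      rw [hσ, triv_add V _ hxb, (T k).apply_mk_symm hxb]
    have hpert : ∀ m : ℕ, ∃ δ : C(X, Fin M → Fin r → ℝ), (∀ x, ‖δ x‖ ≤ 1 / ((m : ℝ) + 1)) ∧
        ∀ x ∈ C k, GoodTuple (H k f x + δ x) := by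
      intro m
      refine exists_perturbation hM (chartAt (EuclideanSpace ℝ (Fin n)) (k : X)) (hCc k) ?_ _ ?_
        (by positivity)
      · intro x hx
        exact (hKsub k (hρK k (hCt k hx))).1
      · refine (hH k).comp (f := fun x => (f, x)) (by fun_prop) ?_
        intro x hx
        exact hCb k hx
    choose δ hδ hgood using hpert
    have hlim : Tendsto δ atTop (𝓝 0) := by
      refine ContinuousMap.tendsto_of_tendstoLocallyUniformly
        (TendstoUniformly.tendstoLocallyUniformly ?_)
      rw [Metric.tendstoUniformly_iff]
      intro ε hε
      have := (tendsto_one_div_add_atTop_nhds_zero_nat (𝕜 := ℝ)).eventually (gt_mem_nhds hε)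
      filter_upwards [this] with m hm x
      simpa using (hδ m x).trans_lt hm
    have h2 : Tendsto (fun m => Ψ (δ m)) atTop (𝓝 f) := by
      have := (hΨ.tendsto 0).comp hlim
      rwa [hΨ0] at this
    refine mem_closure_of_tendsto h2 (Eventually.of_forall fun m => ?_)
    intro x hx
    rw [hHk _ x hx]
    exact hgood m x hx
  have hB : BaireSpace 𝒞 := by
    infer_instance
  have hdense := dense_iInter_of_isOpen hO hOd
  obtain ⟨f, hf⟩ := hdense.nonempty
  refine ⟨M, σ f, fun a => ?_, fun x => ?_⟩
  · exact (hjoint a).comp (f := fun x => (f, x)) (by fun_prop)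
  · have h1 := ρ.ind_apply x (Set.mem_univ x)
    set k := ρ.ind x (Set.mem_univ x)
    have hx : x ∈ C k := h1
    obtain ⟨I, hI⟩ := Set.mem_iInter.1 hf k x hx
    refine ⟨I, ?_⟩
    refine LinearIndependent.of_comp ((T k).linearMapAt ℝ x) ?_
    convert hI using 1
    ext1 j
    simp only [Function.comp]
    rw [Trivialization.linearMapAt_apply, if_pos (hCb k hx)]

end PartThree

section PartFour

/-- Gram-Schmidt for families. -/
lemma gram_schmidt_family {X : Type} [TopologicalSpace X] (U : Set X) (E : X → Type)
    [∀ x, AddCommGroup (E x)] [∀ x, Module ℝ (E x)]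
    (q : ∀ x, E x →ₗ[ℝ] E x →ₗ[ℝ] ℝ) (qsymm : ∀ x v w, q x v w = q x w v)
    (qpos : ∀ x v, v ≠ 0 → 0 < q x v v)
    (P : (∀ x, E x) → Prop)
    (Psum : ∀ {κ : Type} (s : Finset κ) (σ : κ → ∀ x, E x), (∀ k, P (σ k)) →
      P (fun x => ∑ k ∈ s, σ k x))
    (Padd : ∀ s t, P s → P t → P (fun x => s x + t x))
    (Psmul : ∀ (c : X → ℝ) s, ContinuousOn c U → P s → P (fun x => c x • s x))
    (Pq : ∀ s t, P s → P t → ContinuousOn (fun x => q x (s x) (t x)) U)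
    (k : ℕ) (v : Fin k → ∀ x, E x) (hv : ∀ j, P (v j))
    (hli : ∀ x ∈ U, LinearIndependent ℝ (fun j => v j x)) :
    ∃ u : Fin k → ∀ x, E x, (∀ j, P (u j)) ∧
      (∀ x ∈ U, ∀ i j, q x (u i x) (u j x) = if i = j then 1 else 0) ∧
      ∀ x, ∀ j, u j x ∈ Submodule.span ℝ (Set.range (fun j => v j x)) := by
  induction k with
  | zero => exact ⟨v, hv, fun x _ i => i.elim0, fun x j => j.elim0⟩
  | succ k ih =>
    obtain ⟨u, hu, hon, hsp⟩ := ih (fun j => v j.castSucc) (fun j => hv _)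
      (fun x hx => (hli x hx).comp _ (Fin.castSucc_injective k))
    let z : ∀ x, E x := fun x => v (Fin.last k) x +
      (-1 : ℝ) • ∑ i, q x (v (Fin.last k) x) (u i x) • u i x
    have hz : P z := Padd _ _ (hv _) (Psmul (fun _ => (-1 : ℝ)) _ continuousOn_const
      (Psum Finset.univ (fun i x => q x (v (Fin.last k) x) (u i x) • u i x)
        (fun i => Psmul _ _ (Pq _ _ (hv _) (hu i)) (hu i))))
    have hsumsp : ∀ x, ∑ i, q x (v (Fin.last k) x) (u i x) • u i x ∈
        Submodule.span ℝ (Set.range (fun j : Fin k => v j.castSucc x)) := fun x =>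
      Submodule.sum_mem _ fun i _ => Submodule.smul_mem _ _ (hsp x i)
    have hz0 : ∀ x ∈ U, z x ≠ 0 := by
      intro x hx h0
      have h1 : v (Fin.last k) x = ∑ i, q x (v (Fin.last k) x) (u i x) • u i x := by
        have : v (Fin.last k) x +
          (-1 : ℝ) • ∑ i, q x (v (Fin.last k) x) (u i x) • u i x = 0 := h0
        rw [neg_one_smul, ← sub_eq_add_neg, sub_eq_zero] at this
        exact this
      have h2 := hsumsp x
      rw [← h1] at h2
      have h3 := (hli x hx).notMem_span_image (s := Set.range Fin.castSucc)
        (x := Fin.last k) (by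
          rintro ⟨j, hj⟩
          exact (Fin.castSucc_lt_last j).ne hj)
      apply h3
      rw [← Set.range_comp]
      exact h2
    have hzu : ∀ x ∈ U, ∀ i, q x (z x) (u i x) = 0 := by
      intro x hx i
      simp only [z, map_add, map_smul, LinearMap.add_apply, LinearMap.smul_apply, map_sum,
        LinearMap.sum_apply, hon x hx]
      simp
    let c : X → ℝ := fun x => (Real.sqrt (q x (z x) (z x)))⁻¹
    have hc : ContinuousOn c U := by
      refine ContinuousOn.inv₀ (Real.continuous_sqrt.comp_continuousOn (Pq _ _ hz hz)) ?_
      intro x hx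
      exact (Real.sqrt_pos.2 (qpos x _ (hz0 x hx))).ne'
    refine ⟨Fin.snoc (α := fun _ => ∀ x, E x) u (fun x => c x • z x), ?_, ?_, ?_⟩
    · intro j
      refine Fin.lastCases ?_ (fun j => ?_) j
      · rw [Fin.snoc_last]
        exact Psmul _ _ hc hz
      · rw [Fin.snoc_castSucc]
        exact hu j
    · intro x hx i j
      refine Fin.lastCases ?_ (fun i => ?_) i
      · refine Fin.lastCases ?_ (fun j => ?_) j
        · simp only [Fin.snoc_last, map_smul, LinearMap.smul_apply, smul_eq_mul, if_true]
          have hp := qpos x _ (hz0 x hx)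
          have hs := Real.mul_self_sqrt hp.le
          have hs' := (Real.sqrt_pos.2 hp).ne'
          simp only [c]
          generalize Real.sqrt (q x (z x) (z x)) = a at *
          rw [← hs]
          field_simp
        · simp only [Fin.snoc_last, Fin.snoc_castSucc, map_smul, LinearMap.smul_apply, hzu x hx]
          simp [(Fin.castSucc_lt_last j).ne']
      · refine Fin.lastCases ?_ (fun j => ?_) j
        · simp only [Fin.snoc_last, Fin.snoc_castSucc, map_smul]
          rw [qsymm, hzu x hx]
          simp [(Fin.castSucc_lt_last i).ne]
        · simp only [Fin.snoc_castSucc, hon x hx, Fin.castSucc_inj]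
    · intro x j
      have hle : Submodule.span ℝ (Set.range (fun j : Fin k => v j.castSucc x)) ≤
          Submodule.span ℝ (Set.range (fun j => v j x)) := by
        refine Submodule.span_mono ?_
        rintro _ ⟨j, rfl⟩
        exact ⟨j.castSucc, rfl⟩
      refine Fin.lastCases ?_ (fun j => ?_) j
      · rw [Fin.snoc_last]
        exact Submodule.smul_mem _ _ (Submodule.add_mem _ (Submodule.subset_span ⟨_, rfl⟩)
          (Submodule.smul_mem _ _ (hle (hsumsp x))))
      · rw [Fin.snoc_castSucc]
        exact hle (hsp x j)

end PartFour

section PartFive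

open Topology Filter

lemma orthonormal_li {E : Type} [AddCommGroup E] [Module ℝ E] (q : E →ₗ[ℝ] E →ₗ[ℝ] ℝ)
    {r : ℕ} (u : Fin r → E) (hu : ∀ i j, q (u i) (u j) = if i = j then 1 else 0) :
    LinearIndependent ℝ u := by
  rw [Fintype.linearIndependent_iff]
  intro g hg i
  have := congrArg (fun z => q z (u i)) hg
  simpa [map_sum, hu] using this

lemma parseval_of_orthonormal {E : Type} [AddCommGroup E] [Module ℝ E] [FiniteDimensional ℝ E]
    (q : E →ₗ[ℝ] E →ₗ[ℝ] ℝ)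
    {r : ℕ} (hr : Module.finrank ℝ E = r)
    (u : Fin r → E) (hu : ∀ i j, q (u i) (u j) = if i = j then 1 else 0) (v w : E) :
    ∑ j, q v (u j) * q w (u j) = q v w := by
  have hli := orthonormal_li q u hu
  have htop : Submodule.span ℝ (Set.range u) = ⊤ :=
    hli.span_eq_top_of_card_eq_finrank' (by simp [hr])
  have hv : v ∈ Submodule.span ℝ (Set.range u) := by rw [htop]; trivial
  have hw : w ∈ Submodule.span ℝ (Set.range u) := by rw [htop]; trivial
  obtain ⟨a, rfl⟩ := (Submodule.mem_span_range_iff_exists_fun ℝ).1 hv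
  obtain ⟨b, rfl⟩ := (Submodule.mem_span_range_iff_exists_fun ℝ).1 hw
  simp [map_sum, hu, mul_comm]

variable {X : Type} [TopologicalSpace X] {r : ℕ} (V : MetricVectorBundle X r)

lemma fiber_equiv (x : X) : Nonempty ((Fin r → ℝ) ≃ₗ[ℝ] V.fiber x) :=
  ⟨((trivializationAt (Fin r → ℝ) V.fiber x).linearEquivAt ℝ x
    (FiberBundle.mem_baseSet_trivializationAt' x)).symm⟩

lemma fiber_fd (x : X) : FiniteDimensional ℝ (V.fiber x) := by
  obtain ⟨e⟩ := fiber_equiv V x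
  exact e.finiteDimensional

lemma fiber_finrank (x : X) : Module.finrank ℝ (V.fiber x) = r := by
  obtain ⟨e⟩ := fiber_equiv V x
  rw [← e.finrank_eq]
  simp

lemma isOpen_li {k : ℕ} (s : Fin k → ∀ x, V.fiber x) (hs : ∀ a, Continuous (V.mk' id (s a))) :
    IsOpen {x | LinearIndependent ℝ (fun j => s j x)} := by
  rw [isOpen_iff_mem_nhds]
  intro x₀ hx₀
  set e := trivializationAt (Fin r → ℝ) V.fiber x₀ with he
  have hb : x₀ ∈ e.baseSet := FiberBundle.mem_baseSet_trivializationAt' _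
  have hc : ContinuousAt (fun x => fun j => (e ⟨x, s j x⟩).2) x₀ := by
    refine continuousAt_pi.2 fun j => ?_
    exact ((FiberBundle.continuousAt_totalSpace (Fin r → ℝ) _).1 (hs j).continuousAt).2
  have hli : LinearIndependent ℝ (fun j => (e ⟨x₀, s j x₀⟩).2) := by
    have h1 : LinearIndependent ℝ (fun j => s j x₀) := hx₀
    exact h1.map' (e.linearEquivAt ℝ x₀ hb).toLinearMap (LinearEquiv.ker _)
  have h2 := hc.preimage_mem_nhds (isOpen_setOfPred_linearIndependent.mem_nhds hli)
  filter_upwards [h2, e.open_baseSet.mem_nhds hb] with x hx hxb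
  have hx' : LinearIndependent ℝ (fun j => (e ⟨x, s j x⟩).2) := hx
  exact LinearIndependent.of_comp (e.linearEquivAt ℝ x hxb).toLinearMap hx'

lemma exists_parseval {n : ℕ} (X : Type) [TopologicalSpace X]
    [ChartedSpace (EuclideanSpace ℝ (Fin n)) X] [Nonempty X]
    [T2Space X] [SecondCountableTopology X] (r : ℕ) (V : MetricVectorBundle X r) :
    ∃ (N : ℕ) (t : Fin (r + N) → ∀ x, V.fiber x), (∀ a, Continuous (V.mk' id (t a))) ∧
      ∀ x v w, ∑ κ, V.metric x v (t κ x) * V.metric x w (t κ x) = V.metric x v w := by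
  classical
  have : LocallyCompactSpace X := ChartedSpace.locallyCompactSpace (EuclideanSpace ℝ (Fin n)) X
  obtain ⟨M, s, hs, hI⟩ := exists_global_sections (n := n) X r V
  let U : (Fin r → Fin M) → Set X := fun I => {x | LinearIndependent ℝ (fun j => s (I j) x)}
  have hU : ∀ I, IsOpen (U I) := fun I => isOpen_li V (fun j => s (I j)) (fun j => hs _)
  have hGS : ∀ I : Fin r → Fin M, ∃ u : Fin r → ∀ x, V.fiber x,
      (∀ j, ContinuousOn (V.mk' id (u j)) (U I)) ∧
      (∀ x ∈ U I, ∀ i j, V.metric x (u i x) (u j x) = if i = j then 1 else 0) := by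
    intro I
    obtain ⟨u, h1, h2, -⟩ := gram_schmidt_family (U I) V.fiber V.metric V.metric_symm
      V.metric_posdef (fun σ => ContinuousOn (V.mk' id σ) (U I))
      (fun s σ h x hx => ts_sum V (p := id) s continuousWithinAt_id (fun k _ => h k x hx))
      (fun s t hs ht x hx => ts_add V (p := id) (hs x hx) (ht x hx))
      (fun c s hc hs x hx => ts_smul V (p := id) (hc x hx) (hs x hx))
      (fun s t hs ht x hx => ts_metric V (p := id) (hs x hx) (ht x hx))
      r (fun j => s (I j)) (fun j => (hs _).continuousOn) (fun x hx => hx)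
    exact ⟨u, h1, h2⟩
  choose u hu hon using hGS
  obtain ⟨ρ, hρ⟩ := PartitionOfUnity.exists_isSubordinate (X := X) (s := Set.univ) isClosed_univ
    U hU (by
      intro x _
      obtain ⟨I, hI⟩ := hI x
      exact Set.mem_iUnion.2 ⟨I, hI⟩)
  let t : (Fin r → Fin M) × Fin r → ∀ x, V.fiber x := fun κ x => Real.sqrt (ρ κ.1 x) • u κ.1 κ.2 x
  have ht : ∀ κ, Continuous (V.mk' id (t κ)) := by
    rintro ⟨I, j⟩
    rw [continuous_iff_continuousAt]
    intro x₀
    rw [← continuousWithinAt_univ]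
    by_cases hx : x₀ ∈ tsupport (ρ I)
    · have hxU := hρ I hx
      refine ts_smul V (p := id) ?_ ?_
      · exact (Real.continuous_sqrt.comp (ρ I).continuous).continuousWithinAt
      · rw [continuousWithinAt_univ]
        exact (hu I j).continuousAt ((hU I).mem_nhds hxU)
    · have hz : ∀ᶠ x in 𝓝[Set.univ] x₀, ρ I x = 0 := by
        rw [nhdsWithin_univ]
        filter_upwards [(isClosed_tsupport (ρ I)).isOpen_compl.mem_nhds hx] with y hy
        exact image_eq_zero_of_notMem_tsupport hy
      refine (ts_zero V continuousWithinAt_id).congr_of_eventuallyEq ?_ ?_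
      · filter_upwards [hz] with y hy
        simp [MetricVectorBundle.mk', t, hy]
      · simp [MetricVectorBundle.mk', t, image_eq_zero_of_notMem_tsupport hx]
  have hpar : ∀ x v w, ∑ κ, V.metric x v (t κ x) * V.metric x w (t κ x) = V.metric x v w := by
    intro x v w
    have hfd := fiber_fd V x
    rw [Fintype.sum_prod_type]
    have hin : ∀ I, ∑ j, V.metric x v (t (I, j) x) * V.metric x w (t (I, j) x) =
        ρ I x * V.metric x v w := by
      intro I
      by_cases hx : ρ I x = 0
      · simp [t, hx]
      · have hxU : x ∈ U I := hρ I (subset_tsupport _ hx)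
        rw [← parseval_of_orthonormal (V.metric x) (fiber_finrank V x) (fun j => u I j x)
          (hon I x hxU) v w, Finset.mul_sum]
        refine Finset.sum_congr rfl fun j _ => ?_
        simp only [t, map_smul, smul_eq_mul]
        nth_rewrite 3 [← Real.mul_self_sqrt (ρ.nonneg I x)]
        ring
    rw [Finset.sum_congr rfl fun I _ => hin I, ← Finset.sum_mul]
    have h1 := ρ.sum_eq_one (Set.mem_univ x)
    rw [finsum_eq_sum_of_fintype] at h1
    rw [h1, one_mul]
  obtain ⟨I₀, -⟩ := hI (Classical.arbitrary X)
  have hne : Nonempty (Fin r → Fin M) := ⟨I₀⟩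
  obtain ⟨N, hN⟩ : ∃ N, Fintype.card ((Fin r → Fin M) × Fin r) = r + N := by
    refine ⟨Fintype.card ((Fin r → Fin M) × Fin r) - r, ?_⟩
    have : r ≤ Fintype.card ((Fin r → Fin M) × Fin r) := by
      rw [Fintype.card_prod, Fintype.card_fin r]
      exact Nat.le_mul_of_pos_left r Fintype.card_pos
    omega
  let ε : Fin (r + N) ≃ (Fin r → Fin M) × Fin r := (Fintype.equivFinOfCardEq hN).symm
  refine ⟨N, fun κ => t (ε κ), fun κ => ht _, fun x v w => ?_⟩
  rw [← hpar x v w]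
  exact ε.sum_comp (fun κ => V.metric x v (t κ x) * V.metric x w (t κ x))

end PartFive

section PartSix

open Topology Filter

/-- the standard inner product -/
noncomputable def dotq (K : ℕ) : (Fin K → ℝ) →ₗ[ℝ] (Fin K → ℝ) →ₗ[ℝ] ℝ :=
  LinearMap.mk₂ ℝ (fun a b => ∑ i, a i * b i)
    (fun a a' b => by simp [add_mul, Finset.sum_add_distrib])
    (fun c a b => by simp [mul_assoc, Finset.mul_sum])
    (fun a b b' => by simp [mul_add, Finset.sum_add_distrib])
    (fun c a b => by simp [mul_left_comm, Finset.mul_sum])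

lemma dotq_apply (K : ℕ) (a b : Fin K → ℝ) : dotq K a b = ∑ i, a i * b i := rfl

lemma dotq_symm (K : ℕ) (a b : Fin K → ℝ) : dotq K a b = dotq K b a := by
  simp [dotq_apply, mul_comm]

lemma dotq_pos (K : ℕ) (a : Fin K → ℝ) (ha : a ≠ 0) : 0 < dotq K a a := by
  rw [dotq_apply]
  obtain ⟨i, hi⟩ := Function.ne_iff.1 ha
  refine Finset.sum_pos' (fun i _ => mul_self_nonneg _) ⟨i, Finset.mem_univ _, ?_⟩
  exact mul_self_pos.2 hi

lemma dotq_cont {Y : Type} [TopologicalSpace Y] {K : ℕ} {f g : Y → Fin K → ℝ} {S : Set Y}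
    (hf : ContinuousOn f S) (hg : ContinuousOn g S) :
    ContinuousOn (fun y => dotq K (f y) (g y)) S := by
  simp only [dotq_apply]
  exact continuousOn_finsetSum _ fun i _ =>
    (continuousOn_pi.1 hf i).mul (continuousOn_pi.1 hg i)

/-- Local orthonormal frames of a subbundle of a trivial bundle. -/
structure FrameData (X : Type) [TopologicalSpace X] (K N : ℕ) where
  U : X → Set X
  b : X → Fin N → X → Fin K → ℝ
  isOpen_U : ∀ i, IsOpen (U i)
  mem_U : ∀ i, i ∈ U i
  cont : ∀ i j, ContinuousOn (b i j) (U i)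
  orth : ∀ i, ∀ x ∈ U i, ∀ k l, dotq K (b i k x) (b i l x) = if k = l then 1 else 0
  expand : ∀ i j, ∀ x ∈ U i, x ∈ U j → ∀ k, ∑ l, dotq K (b i k x) (b j l x) • b j l x = b i k x

namespace FrameData

variable {X : Type} [TopologicalSpace X] {K N : ℕ} (D : FrameData X K N)

/-- synthesis -/
noncomputable def S (i x : X) : (Fin N → ℝ) →ₗ[ℝ] (Fin K → ℝ) :=
  Fintype.linearCombination ℝ (fun k => D.b i k x)

/-- analysis -/
noncomputable def R (j x : X) : (Fin K → ℝ) →ₗ[ℝ] (Fin N → ℝ) :=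
  LinearMap.pi (fun l => (dotq K).flip (D.b j l x))

lemma S_apply (i x : X) (v : Fin N → ℝ) : D.S i x v = ∑ k, v k • D.b i k x := rfl

lemma R_apply (i x : X) (c : Fin K → ℝ) (l : Fin N) : D.R i x c l = dotq K c (D.b i l x) := rfl

lemma dotq_S (i x : X) (c : Fin K → ℝ) (w : Fin N → ℝ) :
    dotq K c (D.S i x w) = dotq N (D.R i x c) w := by
  rw [S_apply, dotq_apply N]
  simp [map_sum, R_apply, mul_comm]

lemma R_S_self (i x : X) (hx : x ∈ D.U i) (v : Fin N → ℝ) : D.R i x (D.S i x v) = v := by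
  ext l
  rw [R_apply, S_apply]
  simp [map_sum, D.orth i x hx]

lemma S_R_S (i j x : X) (hi : x ∈ D.U i) (hj : x ∈ D.U j) (v : Fin N → ℝ) :
    D.S j x (D.R j x (D.S i x v)) = D.S i x v := by
  have h : ∀ k, D.S j x (D.R j x (D.b i k x)) = D.b i k x := fun k => D.expand i j x hi hj k
  rw [S_apply D i]
  simp only [map_sum, map_smul, h]

lemma R_S_R (i j x : X) (hi : x ∈ D.U i) (hj : x ∈ D.U j) (c : Fin K → ℝ) :
    D.R i x (D.S j x (D.R j x c)) = D.R i x c := by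
  ext l
  rw [R_apply, R_apply, dotq_symm, dotq_S, dotq_symm, ← dotq_S]
  congr 1
  exact D.expand i j x hi hj l

lemma dotq_S_S (i x : X) (hx : x ∈ D.U i) (v w : Fin N → ℝ) :
    dotq K (D.S i x v) (D.S i x w) = dotq N v w := by
  rw [dotq_S, R_S_self D i x hx]

lemma cont_S {Y : Type} [TopologicalSpace Y] {p : Y → X} {w : Y → Fin N → ℝ} {T : Set Y} (i : X)
    (hp : ContinuousOn p T) (hw : ContinuousOn w T) (h : ∀ y ∈ T, p y ∈ D.U i) :
    ContinuousOn (fun y => D.S i (p y) (w y)) T := by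
  simp only [S_apply]
  refine continuousOn_finsetSum _ fun k _ => (continuousOn_pi.1 hw k).smul ?_
  exact (D.cont i k).comp hp h

lemma cont_R {Y : Type} [TopologicalSpace Y] {p : Y → X} {c : Y → Fin K → ℝ} {T : Set Y} (i : X)
    (hp : ContinuousOn p T) (hc : ContinuousOn c T) (h : ∀ y ∈ T, p y ∈ D.U i) :
    ContinuousOn (fun y => D.R i (p y) (c y)) T := by
  refine continuousOn_pi.2 fun l => ?_
  exact dotq_cont hc ((D.cont i l).comp hp h)

/-- the vector bundle core -/
noncomputable def core : VectorBundleCore ℝ X (Fin N → ℝ) X where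
  baseSet := D.U
  isOpen_baseSet := D.isOpen_U
  indexAt := id
  mem_baseSet_at := D.mem_U
  coordChange i j x := LinearMap.toContinuousLinearMap (D.R j x ∘ₗ D.S i x)
  coordChange_self i x hx v := D.R_S_self i x hx v
  continuousOn_coordChange i j := by
    rw [continuousOn_clm_apply]
    intro v
    exact D.cont_R j continuousOn_id
      (D.cont_S i continuousOn_id continuousOn_const fun y hy => hy.1) fun y hy => hy.2
  coordChange_comp i j k x hx v := by
    change D.R k x (D.S j x (D.R j x (D.S i x v))) = D.R k x (D.S i x v)
    rw [D.S_R_S i j x hx.1.1 hx.1.2]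

lemma coordChange_apply (i j x : X) (v : Fin N → ℝ) :
    D.core.coordChange i j x v = D.R j x (D.S i x v) := rfl

/-- the metric vector bundle -/
noncomputable def bundle : MetricVectorBundle X N where
  fiber := D.core.Fiber
  metric := fun _ => dotq N
  metric_symm := fun _ => dotq_symm N
  metric_posdef := fun _ => dotq_pos N
  metric_continuous := by
    intro e he
    obtain ⟨i, rfl⟩ := he.out
    have : ContinuousOn (fun p : X × (Fin N → ℝ) × (Fin N → ℝ) => dotq N p.2.1 p.2.2)
        {p : X × (Fin N → ℝ) × (Fin N → ℝ) | p.1 ∈ D.U i} :=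
      dotq_cont (by fun_prop) (by fun_prop)
    refine this.congr ?_
    intro p hp
    have hp' : p.1 ∈ D.U i := hp
    have hs : ∀ v, (D.core.localTriv i).symm p.1 v = D.R p.1 p.1 (D.S i p.1 v) := by
      intro v
      exact D.core.localTriv_symm_apply (i := i) (b := p.1) hp' v
    have key : dotq N (D.R p.1 p.1 (D.S i p.1 p.2.1)) (D.R p.1 p.1 (D.S i p.1 p.2.2)) =
        dotq N p.2.1 p.2.2 := by
      rw [← D.dotq_S_S p.1 p.1 (D.mem_U _), D.S_R_S i p.1 p.1 hp' (D.mem_U _),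
        D.S_R_S i p.1 p.1 hp' (D.mem_U _), D.dotq_S_S i p.1 hp']
    exact (congrArg₂ (fun a b : Fin N → ℝ => dotq N a b) (hs p.2.1) (hs p.2.2)).trans key

lemma cont_S_total : Continuous (fun p : TotalSpace (Fin N → ℝ) D.bundle.fiber =>
    D.S p.1 p.1 p.2) := by
  rw [continuous_iff_continuousAt]
  intro p₀
  let e := D.core.localTriv p₀.1
  have hb : p₀.1 ∈ D.U p₀.1 := D.mem_U _
  have hpr : Continuous (fun p : TotalSpace (Fin N → ℝ) D.bundle.fiber => p.1) :=
    FiberBundle.continuous_proj (Fin N → ℝ) D.bundle.fiber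
  have hopen : IsOpen {p : TotalSpace (Fin N → ℝ) D.bundle.fiber | p.1 ∈ D.U p₀.1} :=
    (D.isOpen_U _).preimage hpr
  have hw : ContinuousOn (fun p : TotalSpace (Fin N → ℝ) D.bundle.fiber =>
      D.R p₀.1 p.1 (D.S p.1 p.1 p.2))
      {p : TotalSpace (Fin N → ℝ) D.bundle.fiber | p.1 ∈ D.U p₀.1} := by
    have h1 : ContinuousOn (fun p => (e p).2) e.source := continuous_snd.comp_continuousOn e.continuousOn
    have h2 : e.source = {p : TotalSpace (Fin N → ℝ) D.bundle.fiber | p.1 ∈ D.U p₀.1} := by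
      ext p
      exact e.mem_source
    rw [← h2]
    exact h1
  have := D.cont_S p₀.1 hpr.continuousOn hw (fun p hp => hp)
  refine ContinuousOn.continuousAt (this.congr ?_) (hopen.mem_nhds hb)
  intro p hp
  exact (D.S_R_S p.1 p₀.1 p.1 (D.mem_U _) hp _).symm

lemma cont_R_total : Continuous (fun q : X × (Fin K → ℝ) =>
    (⟨q.1, D.R q.1 q.1 q.2⟩ : TotalSpace (Fin N → ℝ) D.bundle.fiber)) := by
  rw [continuous_iff_continuousAt]
  intro q₀
  refine (FiberBundle.continuousAt_totalSpace (Fin N → ℝ) _).2 ⟨continuous_fst.continuousAt, ?_⟩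
  have hopen : IsOpen {q : X × (Fin K → ℝ) | q.1 ∈ D.U q₀.1} :=
    (D.isOpen_U _).preimage continuous_fst
  have h := D.cont_R (T := {q : X × (Fin K → ℝ) | q.1 ∈ D.U q₀.1}) q₀.1
    continuous_fst.continuousOn continuous_snd.continuousOn (fun q hq => hq)
  refine ContinuousOn.continuousAt (h.congr ?_) (hopen.mem_nhds (D.mem_U _))
  intro q hq
  exact D.R_S_R q₀.1 q.1 q.1 hq (D.mem_U _) q.2

end FrameData

end PartSix

section PartSeven

open Topology Filter

variable {X : Type} [TopologicalSpace X] {r N : ℕ} (V : MetricVectorBundle X r)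

/-- synthesis with the Parseval frame -/
noncomputable def frameSyn (t : Fin (r + N) → ∀ x, V.fiber x) (x : X) :
    (Fin (r + N) → ℝ) →ₗ[ℝ] V.fiber x :=
  Fintype.linearCombination ℝ (fun κ => t κ x)

/-- analysis with the Parseval frame -/
noncomputable def frameAna (t : Fin (r + N) → ∀ x, V.fiber x) (x : X) :
    V.fiber x →ₗ[ℝ] (Fin (r + N) → ℝ) :=
  LinearMap.pi (fun κ => (V.metric x).flip (t κ x))

variable (t : Fin (r + N) → ∀ x, V.fiber x)

lemma frameSyn_apply (x : X) (c : Fin (r + N) → ℝ) :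
    frameSyn V t x c = ∑ κ, c κ • t κ x := rfl

lemma frameAna_apply (x : X) (v : V.fiber x) (κ : Fin (r + N)) :
    frameAna V t x v κ = V.metric x v (t κ x) := rfl


lemma metric_syn (x : X) (c : Fin (r + N) → ℝ) (v : V.fiber x) :
    V.metric x (frameSyn V t x c) v = dotq (r + N) c (frameAna V t x v) := by
  rw [frameSyn_apply, dotq_apply]
  simp only [map_sum, LinearMap.sum_apply, map_smul, LinearMap.smul_apply, smul_eq_mul,
    frameAna_apply]
  exact Finset.sum_congr rfl fun κ _ => by rw [V.metric_symm]

lemma syn_ana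
    (hpar : ∀ x v w, ∑ κ, V.metric x v (t κ x) * V.metric x w (t κ x) = V.metric x v w)
    (x : X) (v : V.fiber x) : frameSyn V t x (frameAna V t x v) = v := by
  by_contra h
  have h1 : frameSyn V t x (frameAna V t x v) - v ≠ 0 := sub_ne_zero.2 h
  have h2 := V.metric_posdef x _ h1
  have h3 : ∀ w, V.metric x (frameSyn V t x (frameAna V t x v) - v) w = 0 := by
    intro w
    rw [map_sub, LinearMap.sub_apply, metric_syn, dotq_apply]
    simp only [frameAna_apply, hpar, sub_self]
  rw [h3] at h2
  exact lt_irrefl _ h2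

lemma finrank_ker
    (hpar : ∀ x v w, ∑ κ, V.metric x v (t κ x) * V.metric x w (t κ x) = V.metric x v w)
    (x : X) : Module.finrank ℝ (LinearMap.ker (frameSyn V t x)) = N := by
  have h1 := LinearMap.finrank_range_add_finrank_ker (frameSyn V t x)
  have h2 : LinearMap.range (frameSyn V t x) = ⊤ :=
    LinearMap.range_eq_top.2 fun v => ⟨_, syn_ana V t hpar x v⟩
  rw [h2, finrank_top, fiber_finrank V x] at h1
  simp at h1
  omega

lemma exists_local_frame
    (hpar : ∀ x v w, ∑ κ, V.metric x v (t κ x) * V.metric x w (t κ x) = V.metric x v w)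
    (ht : ∀ a, Continuous (V.mk' id (t a))) (x₀ : X) :
    ∃ (U : Set X) (b : Fin N → X → Fin (r + N) → ℝ), IsOpen U ∧ x₀ ∈ U ∧
      (∀ j, ContinuousOn (b j) U) ∧
      (∀ x ∈ U, ∀ k l, dotq (r + N) (b k x) (b l x) = if k = l then 1 else 0) ∧
      ∀ x j, frameSyn V t x (b j x) = 0 := by
  classical
  let B := Module.finBasisOfFinrankEq ℝ _ (finrank_ker V t hpar x₀)
  let w : Fin N → Fin (r + N) → ℝ := fun j => (B j : Fin (r + N) → ℝ)
  have hwli : LinearIndependent ℝ w :=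
    B.linearIndependent.map' (Submodule.subtype _) (Submodule.ker_subtype _)
  have hw0 : ∀ j, frameSyn V t x₀ (w j) = 0 := fun j => (B j).2
  let β : X → Fin N → Fin (r + N) → ℝ := fun x j => w j - frameAna V t x (frameSyn V t x (w j))
  have hβ : Continuous β := by
    refine continuous_pi fun j => continuous_const.sub (continuous_pi fun κ => ?_)
    rw [continuous_iff_continuousAt]
    intro x
    rw [← continuousWithinAt_univ]
    refine ts_metric V (p := id) ?_ (ht κ).continuousWithinAt
    exact ts_sum V (p := id) Finset.univ continuousWithinAt_id
      (fun l _ => ts_smul V (p := id) continuousWithinAt_const (ht l).continuousWithinAt)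
  have hβ0 : ∀ x j, frameSyn V t x (β x j) = 0 := by
    intro x j
    simp only [β, map_sub]
    rw [syn_ana V t hpar, sub_self]
  let U : Set X := β ⁻¹' {f | LinearIndependent ℝ f}
  have hU : IsOpen U := isOpen_setOfPred_linearIndependent.preimage hβ
  have hx₀ : x₀ ∈ U := by
    have : β x₀ = w := by
      ext1 j
      simp only [β, hw0, map_zero, sub_zero]
    change LinearIndependent ℝ (β x₀)
    rw [this]
    exact hwli
  obtain ⟨b, h1, h2, h3⟩ := gram_schmidt_family U (fun _ => Fin (r + N) → ℝ)
    (fun _ => dotq (r + N)) (fun _ => dotq_symm _) (fun _ => dotq_pos _)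
    (fun σ => ContinuousOn σ U)
    (fun s σ h => continuousOn_finsetSum _ fun k _ => h k)
    (fun s t hs ht => hs.add ht)
    (fun c s hc hs => hc.smul hs)
    (fun s t hs ht => dotq_cont hs ht)
    N (fun j x => β x j) (fun j => ((continuous_apply j).comp hβ).continuousOn) (fun x hx => hx)
  refine ⟨U, b, hU, hx₀, h1, h2, fun x j => ?_⟩
  have hle : Submodule.span ℝ (Set.range fun j => β x j) ≤ LinearMap.ker (frameSyn V t x) := by
    rw [Submodule.span_le]
    rintro _ ⟨j, rfl⟩
    exact hβ0 x j
  exact hle (h3 x j)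

lemma expand_ker
    (hpar : ∀ x v w, ∑ κ, V.metric x v (t κ x) * V.metric x w (t κ x) = V.metric x v w)
    (x : X) (b : Fin N → Fin (r + N) → ℝ)
    (hb : ∀ k l, dotq (r + N) (b k) (b l) = if k = l then 1 else 0)
    (hb0 : ∀ j, frameSyn V t x (b j) = 0) (c : Fin (r + N) → ℝ) (hc : frameSyn V t x c = 0) :
    ∑ l, dotq (r + N) c (b l) • b l = c := by
  have hli := orthonormal_li (dotq (r + N)) b hb
  have hle : Submodule.span ℝ (Set.range b) ≤ LinearMap.ker (frameSyn V t x) := by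
    rw [Submodule.span_le]
    rintro _ ⟨j, rfl⟩
    exact hb0 j
  have heq := Submodule.eq_of_le_of_finrank_eq hle (by
    rw [finrank_ker V t hpar, finrank_span_eq_card hli, Fintype.card_fin])
  have hc' : c ∈ Submodule.span ℝ (Set.range b) := by
    rw [heq]
    exact hc
  obtain ⟨a, rfl⟩ := (Submodule.mem_span_range_iff_exists_fun ℝ).1 hc'
  refine Finset.sum_congr rfl fun l _ => ?_
  congr 1
  simp [map_sum, hb]

lemma exists_frameData
    (hpar : ∀ x v w, ∑ κ, V.metric x v (t κ x) * V.metric x w (t κ x) = V.metric x v w)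
    (ht : ∀ a, Continuous (V.mk' id (t a))) :
    ∃ D : FrameData X (r + N) N, ∀ i x j, frameSyn V t x (D.b i j x) = 0 := by
  choose U b h1 h2 h3 h4 h5 using exists_local_frame V t hpar ht
  exact ⟨⟨U, b, h1, h2, h3, h4, fun i j x _ hj k =>
    expand_ker V t hpar x _ (h4 j x hj) (h5 j x) _ (h5 i x k)⟩, h5⟩

end PartSeven

section PartEight

variable {X : Type} [TopologicalSpace X] {r N : ℕ} (V : MetricVectorBundle X r)
  (t : Fin (r + N) → ∀ x, V.fiber x)

lemma syn_S
    (D : FrameData X (r + N) N)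
    (hD : ∀ i x j, frameSyn V t x (D.b i j x) = 0)
    (x : X) (w : Fin N → ℝ) : frameSyn V t x (D.S x x w) = 0 := by
  rw [FrameData.S_apply]
  simp only [map_sum, map_smul, hD, smul_zero, Finset.sum_const_zero]

lemma R_ana
    (D : FrameData X (r + N) N)
    (hD : ∀ i x j, frameSyn V t x (D.b i j x) = 0)
    (x : X) (v : V.fiber x) : D.R x x (frameAna V t x v) = 0 := by
  ext l
  rw [FrameData.R_apply, dotq_symm, ← metric_syn, hD]
  simp

lemma ana_syn_add
    (hpar : ∀ x v w, ∑ κ, V.metric x v (t κ x) * V.metric x w (t κ x) = V.metric x v w)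
    (D : FrameData X (r + N) N)
    (hD : ∀ i x j, frameSyn V t x (D.b i j x) = 0)
    (x : X) (c : Fin (r + N) → ℝ) :
    frameAna V t x (frameSyn V t x c) + D.S x x (D.R x x c) = c := by
  have h1 : frameSyn V t x (c - frameAna V t x (frameSyn V t x c)) = 0 := by
    rw [map_sub, syn_ana V t hpar, sub_self]
  have h2 : D.S x x (D.R x x (c - frameAna V t x (frameSyn V t x c))) =
      c - frameAna V t x (frameSyn V t x c) :=
    expand_ker V t hpar x _ (D.orth x x (D.mem_U x)) (hD x x) _ h1
  rw [map_sub, R_ana V t D hD, sub_zero] at h2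
  rw [h2]
  abel

/-- the fiberwise isomorphism -/
noncomputable def totalEquiv
    (hpar : ∀ x v w, ∑ κ, V.metric x v (t κ x) * V.metric x w (t κ x) = V.metric x v w)
    (D : FrameData X (r + N) N)
    (hD : ∀ i x j, frameSyn V t x (D.b i j x) = 0)
    (x : X) : (V.fiber x × (Fin N → ℝ)) ≃ₗ[ℝ] (Fin (r + N) → ℝ) :=
  LinearEquiv.ofLinearMap
    ((frameAna V t x).coprod (D.S x x))
    ((frameSyn V t x).prod (D.R x x))
    (LinearMap.ext fun c => ana_syn_add V t hpar D hD x c)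
    (LinearMap.ext fun p => Prod.ext
      (by
        change frameSyn V t x (frameAna V t x p.1 + D.S x x p.2) = p.1
        rw [map_add, syn_ana V t hpar, syn_S V t D hD, add_zero])
      (by
        change D.R x x (frameAna V t x p.1 + D.S x x p.2) = p.2
        rw [map_add, R_ana V t D hD, D.R_S_self x x (D.mem_U x), zero_add]))

lemma totalEquiv_isometry
    (hpar : ∀ x v w, ∑ κ, V.metric x v (t κ x) * V.metric x w (t κ x) = V.metric x v w)
    (D : FrameData X (r + N) N)
    (hD : ∀ i x j, frameSyn V t x (D.b i j x) = 0)
    (x : X) (v w : V.fiber x × (Fin N → ℝ)) :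
    dotq (r + N) (frameAna V t x v.1 + D.S x x v.2) (frameAna V t x w.1 + D.S x x w.2) =
      V.metric x v.1 w.1 + dotq N v.2 w.2 := by
  have h0 : ∀ (a : V.fiber x) (b : Fin N → ℝ), dotq (r + N) (frameAna V t x a) (D.S x x b) = 0 := by
    intro a b
    rw [D.dotq_S, R_ana V t D hD]
    simp
  have h1 : dotq (r + N) (frameAna V t x v.1) (frameAna V t x w.1) = V.metric x v.1 w.1 := by
    rw [← hpar x v.1 w.1]
    rfl
  simp only [map_add, LinearMap.add_apply, h0, h1, D.dotq_S_S x x (D.mem_U x)]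
  rw [dotq_symm _ (D.S x x v.2), h0]
  ring

lemma totalEquiv_cont
    (D : FrameData X (r + N) N)
    (ht : ∀ a, Continuous (V.mk' id (t a))) :
    Continuous (fun p : TotalSpace ((Fin r → ℝ) × (Fin N → ℝ)) (V.fiber ×ᵇ D.bundle.fiber) =>
      (p.proj, frameAna V t p.proj p.snd.1 + D.S p.proj p.proj p.snd.2)) := by
  have hd := (FiberBundle.Prod.isInducing_diag (Fin r → ℝ) V.fiber (Fin N → ℝ)
    D.bundle.fiber).continuous
  have hV : Continuous (fun p : TotalSpace ((Fin r → ℝ) × (Fin N → ℝ))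
    (V.fiber ×ᵇ D.bundle.fiber) => V.mk' (fun p : TotalSpace ((Fin r → ℝ) × (Fin N → ℝ))
    (V.fiber ×ᵇ D.bundle.fiber) => p.proj) (fun p => p.snd.1) p) := continuous_fst.comp hd
  have hW : Continuous (fun p : TotalSpace ((Fin r → ℝ) × (Fin N → ℝ))
    (V.fiber ×ᵇ D.bundle.fiber) => (⟨p.proj, p.snd.2⟩ : TotalSpace (Fin N → ℝ) D.bundle.fiber)) :=
    continuous_snd.comp hd
  have hproj : Continuous (fun p : TotalSpace ((Fin r → ℝ) × (Fin N → ℝ))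
      (V.fiber ×ᵇ D.bundle.fiber) => p.proj) :=
    (FiberBundle.continuous_proj (Fin r → ℝ) V.fiber).comp hV
  refine hproj.prodMk (Continuous.add ?_ (D.cont_S_total.comp hW))
  refine continuous_pi fun κ => ?_
  rw [continuous_iff_continuousAt]
  intro p₀
  rw [← continuousWithinAt_univ]
  exact ts_metric V hV.continuousWithinAt ((ht κ).comp hproj).continuousWithinAt

lemma totalEquiv_symm_cont
    (D : FrameData X (r + N) N)
    (ht : ∀ a, Continuous (V.mk' id (t a))) :
    Continuous (fun q : X × (Fin (r + N) → ℝ) =>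
      (TotalSpace.mk q.1 (frameSyn V t q.1 q.2, D.R q.1 q.1 q.2) :
        TotalSpace ((Fin r → ℝ) × (Fin N → ℝ)) (V.fiber ×ᵇ D.bundle.fiber))) := by
  refine (FiberBundle.Prod.isInducing_diag (Fin r → ℝ) V.fiber (Fin N → ℝ)
    D.bundle.fiber).continuous_iff.2 ?_
  refine Continuous.prodMk (?_ : Continuous (V.mk' (fun q : X × (Fin (r + N) → ℝ) => q.1)
    (fun q => frameSyn V t q.1 q.2))) D.cont_R_total
  rw [continuous_iff_continuousAt]
  intro q₀
  rw [← continuousWithinAt_univ]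
  refine ts_sum V (Finset.univ : Finset (Fin (r + N)))
    (σ := fun κ (q : X × (Fin (r + N) → ℝ)) => q.2 κ • t κ q.1)
    continuous_fst.continuousWithinAt (fun κ _ => ts_smul V ?_ ?_)
  · exact ((continuous_apply κ).comp continuous_snd).continuousWithinAt
  · exact ((ht κ).comp continuous_fst).continuousWithinAt

end PartEight

/-- Every metric vector bundle over a connected topological manifold embeds
isometrically as a direct summand of a trivial bundle: there are a metric vector
bundle `W` and a fiberwise-isometric vector bundle isomorphism `V ⊕ W ≅ X × ℝ^N`. -/
theorem isometric_trivialization_of_metric_vector_bundle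
    {n : ℕ} (X : Type) [TopologicalSpace X] [ChartedSpace (EuclideanSpace ℝ (Fin n)) X]
    [ConnectedSpace X] [T2Space X] [SecondCountableTopology X]
    (r : ℕ) (V : MetricVectorBundle X r) :
    ∃ (N : ℕ) (W : MetricVectorBundle X N)
      (φ : ∀ x : X, (V.fiber x × W.fiber x) ≃ₗ[ℝ] (Fin (r + N) → ℝ)),
      -- each `φ x` is a linear isometry from the orthogonal direct sum of the
      -- fiber inner products to the standard Euclidean inner product
      (∀ (x : X) (v w : V.fiber x × W.fiber x),
        (∑ i, φ x v i * φ x w i) = V.metric x v.1 w.1 + W.metric x v.2 w.2) ∧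
      -- `φ` is an isomorphism of topological vector bundles: the induced map on
      -- total spaces is a homeomorphism onto the trivial bundle `X × ℝ^{r+N}`
      Continuous (fun p : Bundle.TotalSpace ((Fin r → ℝ) × (Fin N → ℝ)) (V.fiber ×ᵇ W.fiber) =>
        (p.proj, φ p.proj p.snd)) ∧
      Continuous (fun q : X × (Fin (r + N) → ℝ) =>
        (Bundle.TotalSpace.mk q.1 ((φ q.1).symm q.2) :
          Bundle.TotalSpace ((Fin r → ℝ) × (Fin N → ℝ)) (V.fiber ×ᵇ W.fiber))) := by

  obtain ⟨N, t, ht, hpar⟩ := exists_parseval (n := n) X r V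
  obtain ⟨D, hD⟩ := exists_frameData V t hpar ht
  refine ⟨N, D.bundle, fun x => totalEquiv V t hpar D hD x, ?_, ?_, ?_⟩
  · intro x v w
    exact totalEquiv_isometry V t hpar D hD x v w
  · exact totalEquiv_cont V t D ht
  · exact totalEquiv_symm_cont V t D ht
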